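/- Let m ≥ 2 be an integer. Among the groups T_{r,m} with 0 < r ≤ m−1, only the group T_{m−1,m} contains elements of every finite order; consequently there is no injective group homomorphism from T_{m−1,m} into T_{r,m} for 0 < r < m−1. -/

import Mathlib

/-!
The obstruction is a congruence modulo `(m - 1)ℤ[1/m]`. Every slope `m ^ s` is congruent to `1`,
so a lift `F` of an element of `T_{r,m}` moves all points of `ℤ[1/m]` by the same amount modulo
`(m - 1)ℤ[1/m]`. If the element has order `m - 1`, then `F^(m-1)` is translation by `p * r` for
an integer `p` prime to `m - 1`, and evaluating at `0` gives `p * r ≡ (m - 1) * F 0 ≡ 0`.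
Since `(m - 1)ℤ[1/m] ∩ ℤ = (m - 1)ℤ`, it follows that `m - 1` divides `r`
(`dvd_of_orderOf_eq`). The properties of lifts used here are stable under products and inverses
(`HasGoodLift`), so the obstruction applies to all of `TGroup r m`.

Conversely, a circle of length `m - 1` can be cut into `q * (m - 1)` arcs whose lengths are powers
of `m` (`exists_partition`), by repeatedly cutting an arc into `m` equal parts. The map sending
each arc affinely to the one `m - 1` places further has order `q` (`exists_inT_orderOf`).

An injective homomorphism preserves orders, so one from `T_{m-1,m}` to `T_{r,m}` would produce an
element of order `m - 1` in `T_{r,m}`, whence `m - 1 ∣ r`.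
-/

open Filter Topology

/-- The set `ℤ[1/m] = {N·m^s : N, s ∈ ℤ}` as a subset of `ℝ`. -/
def ZInvM (m : ℕ) : Set ℝ := {x : ℝ | ∃ N s : ℤ, x = (N : ℝ) * (m : ℝ) ^ s}

/-- `F : ℝ → ℝ` is a lift of an orientation-preserving `PL_m` homeomorphism from the
circle `ℝ/rℤ` to the circle `ℝ/r'ℤ`: it is strictly increasing, commutes appropriately
with the translations, and is affine on the pieces of a finite subdivision
`0 = a₀ < a₁ < ... < aₙ = r` of `[0, r]`, with slopes powers of `m`, breakpoints in
`ℤ[1/m]` and images of breakpoints in `ℤ[1/m]`. -/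
def IsPLmLift (m : ℕ) (r r' : ℝ) (F : ℝ → ℝ) : Prop :=
  StrictMono F ∧ (∀ x : ℝ, F (x + r) = F x + r') ∧
    ∃ (n : ℕ) (a : Fin (n + 1) → ℝ),
      StrictMono a ∧ a 0 = 0 ∧ a (Fin.last n) = r ∧
      (∀ i, a i ∈ ZInvM m) ∧ (∀ i, F (a i) ∈ ZInvM m) ∧
      ∀ i : Fin n, ∃ (s : ℤ) (β : ℝ),
        ∀ x ∈ Set.Icc (a i.castSucc) (a i.succ), F x = (m : ℝ) ^ s * x + β

/-- Membership in the Brown–Thompson group `T_{r,m}`, viewed inside the permutations of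
the circle `ℝ/rℤ`: `f` is induced by a `PL_m` lift. -/
def InT (r m : ℕ) (f : Equiv.Perm (AddCircle (r : ℝ))) : Prop :=
  ∃ F : ℝ → ℝ, IsPLmLift m r r F ∧ ∀ x : ℝ, f ↑x = ↑(F x)

/-- The Brown–Thompson group `T_{r,m}` as a subgroup of the permutations of `ℝ/rℤ`.
(The set of `PL_m` homeomorphisms is closed under composition and inverses, so it
coincides with the subgroup it generates.) -/
def TGroup (r m : ℕ) : Subgroup (Equiv.Perm (AddCircle (r : ℝ))) :=
  Subgroup.closure {f | InT r m f}


/-! ### Arithmetic of `ℤ[1/m]` -/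

lemma mem_ZInvM_iff {m : ℕ} (hm : 2 ≤ m) (x : ℝ) :
    x ∈ ZInvM m ↔ ∃ (N : ℤ) (t : ℕ), x * (m : ℝ) ^ t = N := by
  have h0 : (m : ℝ) ≠ 0 := by positivity
  constructor
  · rintro ⟨N, s, rfl⟩
    obtain ⟨t, rfl | rfl⟩ := Int.eq_nat_or_neg s
    · exact ⟨N * (m : ℤ) ^ t, 0, by push_cast; simp⟩
    · exact ⟨N, t, by rw [zpow_neg, zpow_natCast]; field_simp⟩
  · rintro ⟨N, t, h⟩
    refine ⟨N, -(t : ℤ), ?_⟩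
    rw [zpow_neg, zpow_natCast, ← h]
    field_simp

/-- The subring `ℤ[1/m]` of `ℝ`. -/
def ringZInv (m : ℕ) (hm : 2 ≤ m) : Subring ℝ where
  carrier := ZInvM m
  mul_mem' := by
    intro x y hx hy
    rw [mem_ZInvM_iff hm] at *
    obtain ⟨N, t, h⟩ := hx
    obtain ⟨M, u, h'⟩ := hy
    exact ⟨N * M, t + u, by push_cast; rw [← h, ← h']; ring⟩
  one_mem' := (mem_ZInvM_iff hm 1).2 ⟨1, 0, by simp⟩
  add_mem' := by
    intro x y hx hy
    rw [mem_ZInvM_iff hm] at *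
    obtain ⟨N, t, h⟩ := hx
    obtain ⟨M, u, h'⟩ := hy
    exact ⟨N * (m : ℤ) ^ u + M * (m : ℤ) ^ t, t + u, by push_cast; rw [← h, ← h']; ring⟩
  zero_mem' := (mem_ZInvM_iff hm 0).2 ⟨0, 0, by simp⟩
  neg_mem' := by
    intro x hx
    rw [mem_ZInvM_iff hm] at *
    obtain ⟨N, t, h⟩ := hx
    exact ⟨-N, t, by push_cast; rw [← h]; ring⟩

lemma zpow_mem_ringZInv {m : ℕ} (hm : 2 ≤ m) (s : ℤ) : (m : ℝ) ^ s ∈ ringZInv m hm :=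
  ⟨1, s, by simp⟩

/-- The ideal `(m - 1)ℤ[1/m]`, as an additive subgroup of `ℝ`. -/
def idealSub (m : ℕ) (hm : 2 ≤ m) : AddSubgroup ℝ :=
  (ringZInv m hm).toAddSubgroup.map (AddMonoidHom.mulLeft ((m : ℝ) - 1))

lemma mem_idealSub {m : ℕ} (hm : 2 ≤ m) (x : ℝ) :
    x ∈ idealSub m hm ↔ ∃ z ∈ ringZInv m hm, ((m : ℝ) - 1) * z = x := Iff.rfl

lemma mul_mem_idealSub {m : ℕ} (hm : 2 ≤ m) {x y : ℝ} (hx : x ∈ idealSub m hm)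
    (hy : y ∈ ringZInv m hm) : x * y ∈ idealSub m hm := by
  obtain ⟨z, hz, rfl⟩ := (mem_idealSub hm x).1 hx
  exact (mem_idealSub hm _).2 ⟨z * y, mul_mem hz hy, by ring⟩

/-- Slopes are congruent to `1` modulo `m - 1`. -/
lemma zpow_sub_one_mem {m : ℕ} (hm : 2 ≤ m) (s : ℤ) :
    (m : ℝ) ^ s - 1 ∈ idealSub m hm := by
  have key : ∀ t : ℕ, (m : ℝ) ^ t - 1 ∈ idealSub m hm := fun t =>
    (mem_idealSub hm _).2 ⟨∑ i ∈ Finset.range t, (m : ℝ) ^ i,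
      sum_mem fun i _ => by exact_mod_cast zpow_mem_ringZInv hm i, mul_geom_sum _ _⟩
  have h0 : (m : ℝ) ≠ 0 := by positivity
  obtain ⟨t, rfl | rfl⟩ := Int.eq_nat_or_neg s
  · exact_mod_cast key t
  · have := neg_mem (mul_mem_idealSub hm (key t) (zpow_mem_ringZInv hm (-(t : ℤ))))
    convert this using 1
    rw [zpow_neg, zpow_natCast]
    field_simp
    ring

/-- `(m - 1)ℤ[1/m] ∩ ℤ = (m - 1)ℤ`, because `m` is invertible modulo `m - 1`. -/
lemma dvd_of_intCast_mem {m : ℕ} (hm : 2 ≤ m) (k : ℤ) (h : (k : ℝ) ∈ idealSub m hm) :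
    ((m : ℤ) - 1) ∣ k := by
  obtain ⟨z, hz, hzk⟩ := (mem_idealSub hm _).1 h
  obtain ⟨N, t, hN⟩ := (mem_ZInvM_iff hm z).1 hz
  have h1 : k * (m : ℤ) ^ t = ((m : ℤ) - 1) * N := by
    have : (k : ℝ) * (m : ℝ) ^ t = ((m : ℝ) - 1) * N := by rw [← hzk, ← hN]; ring
    exact_mod_cast this
  have hc : IsCoprime ((m : ℤ) - 1) ((m : ℤ) ^ t) :=
    IsCoprime.pow_right ⟨-1, 1, by ring⟩
  exact hc.dvd_of_dvd_mul_right ⟨N, h1⟩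

/-! ### The obstruction to elements of order `m - 1` -/

/-- `f` is induced by an order automorphism `F` of `ℝ` that commutes with translation by `r`,
preserves `ℤ[1/m]`, and satisfies `F x - F y ≡ x - y` modulo `(m - 1)ℤ[1/m]` on `ℤ[1/m]`.
Elements of `T_{r,m}` have these properties, which are visibly stable under composition and
inversion. -/
def HasGoodLift (r m : ℕ) (hm : 2 ≤ m) (f : Equiv.Perm (AddCircle (r : ℝ))) : Prop :=
  ∃ F : ℝ ≃o ℝ, (∀ x, F (x + r) = F x + r) ∧
    (∀ x, F x ∈ ringZInv m hm ↔ x ∈ ringZInv m hm) ∧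
    (∀ x ∈ ringZInv m hm, ∀ y ∈ ringZInv m hm, F x - F y - (x - y) ∈ idealSub m hm) ∧
    ∀ x : ℝ, f ↑x = ↑(F x)

lemma exists_int_of_coe_eq {r x y : ℝ} (h : (x : AddCircle r) = y) :
    ∃ k : ℤ, x = y + k * r := by
  have h1 : ((x - y : ℝ) : AddCircle r) = 0 := by
    rw [AddCircle.coe_sub, h, sub_self]
  obtain ⟨k, hk⟩ := (AddCircle.coe_eq_zero_iff r).1 h1
  exact ⟨k, by rw [zsmul_eq_mul] at hk; linarith⟩

lemma coe_add_int_mul {r : ℝ} (x : ℝ) (k : ℤ) :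
    ((x + k * r : ℝ) : AddCircle r) = x := by
  have : ((k * r : ℝ) : AddCircle r) = 0 :=
    (AddCircle.coe_eq_zero_iff r).2 ⟨k, zsmul_eq_mul _ _⟩
  rw [AddCircle.coe_add, this, add_zero]

lemma map_add_int_mul {F : ℝ → ℝ} {r r' : ℝ} (h : ∀ x, F (x + r) = F x + r') (k : ℤ) (x : ℝ) :
    F (x + k * r) = F x + k * r' := by
  induction k using Int.induction_on with
  | zero => simp
  | succ i ih =>
    have := h (x + (i : ℤ) * r)
    rw [ih] at this
    push_cast at this ⊢
    rw [show x + (i + 1) * r = x + i * r + r by ring, this]; ring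
  | pred i ih =>
    have := h (x + ((-(i : ℤ) - 1 : ℤ) : ℝ) * r)
    rw [show x + ((-(i : ℤ) - 1 : ℤ) : ℝ) * r + r = x + ((-(i : ℤ) : ℤ) : ℝ) * r by
      push_cast; ring, ih] at this
    push_cast at this ⊢
    linarith

/-- An element given by a piecewise affine lift has a good lift: the congruence is propagated from
each piece `[a i, a (i + 1)]` to the next, and then to `ℝ` by periodicity. -/
lemma InT.hasGoodLift {r m : ℕ} (hr : 0 < r) (hm : 2 ≤ m)
    {f : Equiv.Perm (AddCircle (r : ℝ))} (hf : InT r m f) : HasGoodLift r m hm f := by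
  obtain ⟨F, ⟨hmono, hper, n, a, ha, ha0, han, haA, hFA, hpc⟩, hfF⟩ := hf
  have hrR : (0 : ℝ) < r := by exact_mod_cast hr
  have hperk := map_add_int_mul hper
  have hsurj : Function.Surjective F := by
    intro y
    obtain ⟨u, hu⟩ := f.surjective (y : AddCircle (r : ℝ))
    induction u using QuotientAddGroup.induction_on with
    | H x =>
      have h1 : ((F x : ℝ) : AddCircle (r : ℝ)) = (y : AddCircle (r : ℝ)) := by
        rw [← hfF]; exact hu
      obtain ⟨k, hk⟩ := exists_int_of_coe_eq h1
      refine ⟨x + (-k : ℤ) * r, ?_⟩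
      rw [hperk, hk]
      push_cast; ring
  have hpos : (m : ℝ) ≠ 0 := by positivity
  have hpiece : ∀ i : Fin (n + 1), ∀ x, 0 ≤ x → x ≤ a i →
      (F x ∈ ringZInv m hm ↔ x ∈ ringZInv m hm) ∧
      (x ∈ ringZInv m hm → F x - F 0 - x ∈ idealSub m hm) := by
    intro i
    induction i using Fin.induction with
    | zero =>
      intro x h0 h1
      rw [ha0] at h1
      obtain rfl : x = 0 := le_antisymm h1 h0
      have h2 := hFA 0
      rw [ha0] at h2
      exact ⟨⟨fun _ => zero_mem _, fun _ => h2⟩, fun _ => by simp [zero_mem]⟩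
    | succ i ih =>
      intro x h0 h1
      rcases le_total x (a i.castSucc) with hx | hx
      · exact ih x h0 hx
      obtain ⟨s, β, hs⟩ := hpc i
      have e1 := hs x ⟨hx, h1⟩
      have e2 := hs (a i.castSucc) ⟨le_rfl, hx.trans h1⟩
      have hai : a i.castSucc ∈ ringZInv m hm := haA _
      have hFi : F (a i.castSucc) ∈ ringZInv m hm := hFA _
      refine ⟨⟨fun h => ?_, fun h => ?_⟩, fun h => ?_⟩
      · have e3 : x = (m : ℝ) ^ (-s) * (F x - F (a i.castSucc)) + a i.castSucc := by
          rw [e1, e2, zpow_neg]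
          field_simp
          ring
        rw [e3]
        exact add_mem (mul_mem (zpow_mem_ringZInv hm _) (sub_mem h hFi)) hai
      · have e3 : F x = (m : ℝ) ^ s * (x - a i.castSucc) + F (a i.castSucc) := by
          rw [e1, e2]; ring
        rw [e3]
        exact add_mem (mul_mem (zpow_mem_ringZInv hm _) (sub_mem h hai)) hFi
      · have h3 := (ih (a i.castSucc) (ha0 ▸ ha.monotone (Fin.zero_le _)) le_rfl).2 hai
        have h4 := mul_mem_idealSub hm (zpow_sub_one_mem hm s) (sub_mem h hai)
        convert add_mem h3 h4 using 1
        rw [e1, e2]; ring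
  have hglob : ∀ x, (F x ∈ ringZInv m hm ↔ x ∈ ringZInv m hm) ∧
      (x ∈ ringZInv m hm → F x - F 0 - x ∈ idealSub m hm) := by
    intro x
    have h1 := hpiece (Fin.last n) (x - ⌊x / r⌋ * r) (Int.sub_floor_div_mul_nonneg x hrR)
      (by rw [han]; exact (Int.sub_floor_div_mul_lt x hrR).le)
    have h2 := hperk ⌊x / r⌋ (x - ⌊x / r⌋ * r)
    rw [sub_add_cancel] at h2
    have hk : (⌊x / r⌋ : ℝ) * r ∈ ringZInv m hm := mul_mem (intCast_mem _ _) (natCast_mem _ _)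
    rw [h2]
    generalize (⌊x / r⌋ : ℝ) * r = c at *
    rw [add_mem_cancel_right hk, h1.1, sub_eq_add_neg x c, add_mem_cancel_right (neg_mem hk)]
    refine ⟨Iff.rfl, fun h => ?_⟩
    convert h1.2 (sub_mem h hk) using 1
    rw [sub_eq_add_neg x c]; ring
  refine ⟨StrictMono.orderIsoOfSurjective F hmono hsurj, hper, fun x => (hglob x).1, ?_, hfF⟩
  intro x hx y hy
  convert sub_mem ((hglob x).2 hx) ((hglob y).2 hy) using 1
  simp only [StrictMono.coe_orderIsoOfSurjective]
  ring

lemma hasGoodLift_of_mem {r m : ℕ} (hr : 0 < r) (hm : 2 ≤ m)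
    {f : Equiv.Perm (AddCircle (r : ℝ))} (hf : f ∈ TGroup r m) : HasGoodLift r m hm f := by
  induction hf using Subgroup.closure_induction with
  | mem f hf => exact InT.hasGoodLift hr hm hf
  | one =>
    exact ⟨OrderIso.refl ℝ, fun _ => rfl, fun _ => Iff.rfl, fun x _ y _ => by simp [zero_mem],
      fun _ => rfl⟩
  | mul f g _ _ hf hg =>
    obtain ⟨F, hF1, hF2, hF3, hF4⟩ := hf
    obtain ⟨G, hG1, hG2, hG3, hG4⟩ := hg
    refine ⟨G.trans F, fun x => by simp [hG1, hF1], fun x => by simp [hF2, hG2], ?_,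
      fun x => by simp [hG4, hF4]⟩
    intro x hx y hy
    convert add_mem (hF3 _ ((hG2 x).2 hx) _ ((hG2 y).2 hy)) (hG3 x hx y hy) using 1
    simp only [OrderIso.trans_apply]
    ring
  | inv f _ hf =>
    obtain ⟨F, hF1, hF2, hF3, hF4⟩ := hf
    have h2 : ∀ x, F.symm x ∈ ringZInv m hm ↔ x ∈ ringZInv m hm := fun x => by
      rw [← hF2, F.apply_symm_apply]
    refine ⟨F.symm, fun x => ?_, h2, ?_, fun x => ?_⟩
    · rw [F.symm_apply_eq, hF1, F.apply_symm_apply]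
    · intro x hx y hy
      have := neg_mem (hF3 _ ((h2 x).2 hx) _ ((h2 y).2 hy))
      rw [F.apply_symm_apply, F.apply_symm_apply] at this
      convert this using 1
      ring
    · rw [Equiv.Perm.inv_eq_iff_eq, hF4, F.apply_symm_apply]

/-- The congruence obstruction: if `F` lifts an element of order `m - 1`, then
`F^(m-1)` is translation by `p * r` with `p` prime to `m - 1`, while
`F^(m-1) 0 ≡ (m - 1) * F 0 ≡ 0` modulo `(m - 1)ℤ[1/m]`. -/
lemma dvd_of_orderOf_eq {r m : ℕ} (hr : 0 < r) (hm : 2 ≤ m)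
    {f : Equiv.Perm (AddCircle (r : ℝ))} (hf : HasGoodLift r m hm f)
    (hord : orderOf f = m - 1) : (m - 1) ∣ r := by
  obtain ⟨F, hF1, hF2, hF3, hF4⟩ := hf
  have hrR : (0 : ℝ) < r := by exact_mod_cast hr
  have hq : 0 < m - 1 := by omega
  have hiter : ∀ (j : ℕ) (x : ℝ), (f ^ j) ↑x = ((F^[j] x : ℝ) : AddCircle (r : ℝ)) := by
    intro j
    induction j with
    | zero => intro x; rfl
    | succ j ih => intro x; rw [pow_succ, Equiv.Perm.mul_apply, hF4, ih]; rfl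
  have hperj : ∀ (j : ℕ) (x : ℝ), F^[j] (x + r) = F^[j] x + r := by
    intro j
    induction j with
    | zero => intro x; rfl
    | succ j ih => intro x; rw [Function.iterate_succ_apply, hF1, ih]; rfl
  have hmonoj : ∀ j : ℕ, StrictMono F^[j] := fun j => F.strictMono.iterate j
  have hk : ∀ x : ℝ, ∃ k : ℤ, F^[m - 1] x = x + k * r := by
    intro x
    have h1 := hiter (m - 1) x
    rw [← hord, pow_orderOf_eq_one, hord] at h1
    exact exists_int_of_coe_eq h1.symm
  obtain ⟨p, hp⟩ := hk 0
  rw [zero_add] at hp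
  -- the translation number is the same at every point, by monotonicity
  have htr0 : ∀ x : ℝ, 0 ≤ x → x < r → F^[m - 1] x = x + p * r := by
    intro x h0 h1
    obtain ⟨k, hkx⟩ := hk x
    have h2 := (hmonoj (m - 1)).monotone h0
    have h3 := hmonoj (m - 1) h1
    have h4 := hperj (m - 1) 0
    rw [zero_add] at h4
    rw [h4, hkx, hp] at h3
    rw [hkx, hp] at h2
    have h5 : (p : ℝ) < k + 1 := by nlinarith
    have h6 : (k : ℝ) < p + 1 := by nlinarith
    have h7 : p < k + 1 := by exact_mod_cast h5
    have h8 : k < p + 1 := by exact_mod_cast h6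
    rw [hkx, show k = p by omega]
  have htr : ∀ x : ℝ, F^[m - 1] x = x + p * r := by
    intro x
    have h1 := htr0 _ (Int.sub_floor_div_mul_nonneg x hrR) (Int.sub_floor_div_mul_lt x hrR)
    have h2 := map_add_int_mul (hperj (m - 1)) ⌊x / r⌋ (x - ⌊x / r⌋ * r)
    rw [sub_add_cancel, h1] at h2
    rw [h2]; ring
  have hcop : Int.gcd p ((m - 1 : ℕ) : ℤ) = 1 := by
    set d := Int.gcd p ((m - 1 : ℕ) : ℤ) with hd
    have hdpos : 0 < d := Int.gcd_pos_of_ne_zero_right _ (by exact_mod_cast hq.ne')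
    obtain ⟨p', hp'⟩ : (d : ℤ) ∣ p := Int.gcd_dvd_left _ _
    obtain ⟨q', hq'⟩ : d ∣ m - 1 := by exact_mod_cast Int.gcd_dvd_right p ((m - 1 : ℕ) : ℤ)
    -- the iterate of `F` and the translation compared here commute and have equal `d`-th iterates,
    -- hence coincide; so the order of `f` divides `(m - 1) / d`, which forces `d = 1`
    have hT : ∀ (j : ℕ) (x : ℝ), (fun y : ℝ => y + p' * r)^[j] x = x + j * (p' * r) := by
      intro j x
      rw [add_right_iterate_apply, nsmul_eq_mul]
    have hcomm : Function.Commute F^[q'] (fun y : ℝ => y + p' * r) := fun x =>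
      map_add_int_mul (hperj q') p' x
    have hG : ∀ x : ℝ, F^[q'] x = x + p' * r := by
      intro x
      have := (hcomm.iterate_pos_eq_iff_map_eq (hmonoj q').monotone
        (fun a b h => by simpa using h) (x := x) hdpos).1
      apply this
      rw [← Function.iterate_mul, mul_comm, ← hq', htr, hT, hp']
      push_cast; ring
    have hone : f ^ q' = 1 := by
      ext u
      induction u using QuotientAddGroup.induction_on with
      | H x =>
        have := hiter q' x
        rw [hG] at this
        exact this.trans (coe_add_int_mul x p')
    have h1 := orderOf_dvd_of_pow_eq_one hone
    rw [hord, hq'] at h1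
    have hq'pos : 0 < q' := by
      rcases Nat.eq_zero_or_pos q' with h | h
      · simp [h] at hq'; omega
      · exact h
    have h2 := Nat.le_of_dvd hq'pos h1
    nlinarith
  have h0A : F 0 ∈ ringZInv m hm := (hF2 0).2 (zero_mem _)
  have hmem : ∀ j : ℕ, F^[j] 0 ∈ ringZInv m hm ∧ F^[j] 0 - j * F 0 ∈ idealSub m hm := by
    intro j
    induction j with
    | zero => simp [zero_mem]
    | succ j ih =>
      rw [Function.iterate_succ_apply']
      refine ⟨(hF2 _).2 ih.1, ?_⟩
      convert add_mem (hF3 _ ih.1 0 (zero_mem _)) ih.2 using 1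
      push_cast; ring
  have hcast : ((m - 1 : ℕ) : ℝ) = (m : ℝ) - 1 := by
    rw [Nat.cast_sub (by omega)]; simp
  have h1 : ((p * r : ℤ) : ℝ) ∈ idealSub m hm := by
    have h2 := (hmem (m - 1)).2
    rw [hp, hcast] at h2
    have h3 := add_mem h2 ((mem_idealSub hm _).2 ⟨F 0, h0A, rfl⟩)
    rw [sub_add_cancel] at h3
    exact_mod_cast h3
  have h2 := dvd_of_intCast_mem hm _ h1
  have h3 : ((m - 1 : ℕ) : ℤ) ∣ p * r := by
    rw [Nat.cast_sub (by omega)]; simpa using h2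
  have h4 : IsCoprime ((m - 1 : ℕ) : ℤ) p := (Int.isCoprime_iff_gcd_eq_one.2 hcop).symm
  exact_mod_cast h4.dvd_of_dvd_mul_left h3

/-! ### Elements of arbitrary finite order in `T_{m-1,m}` -/

/-- The length `m - 1` is a sum of `(q + 1) * (m - 1)` powers of `m`: start with `m - 1` unit pieces
and repeatedly split the last piece into `m` equal parts. -/
lemma exists_partition {m : ℕ} (hm : 2 ≤ m) (q : ℕ) :
    ∃ s : ℕ → ℤ, ∑ i ∈ Finset.range ((q + 1) * (m - 1)), (m : ℝ) ^ s i = (m - 1 : ℕ) := by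
  have h0 : (m : ℝ) ≠ 0 := by positivity
  induction q with
  | zero => exact ⟨fun _ => 0, by simp⟩
  | succ q ih =>
    obtain ⟨s, hs⟩ := ih
    obtain ⟨N, hN⟩ : ∃ N, (q + 1) * (m - 1) = N + 1 :=
      Nat.exists_eq_add_one.2 (Nat.mul_pos (by omega) (by omega))
    have hN' : (q + 1 + 1) * (m - 1) = N + m := by
      rw [add_mul (q + 1), hN]; omega
    refine ⟨fun i => if i < N then s i else s N - 1, ?_⟩
    rw [hN, Finset.sum_range_succ] at hs
    rw [hN', Finset.sum_range_add, ← hs]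
    congr 1
    · exact Finset.sum_congr rfl fun i hi => by simp [Finset.mem_range.1 hi]
    · simp only [Nat.not_lt.2 (Nat.le_add_right N _), if_false, Finset.sum_const,
        Finset.card_range, nsmul_eq_mul, zpow_sub_one₀ h0]
      field_simp

/-- A partition of `[0, m - 1]` into `q * (m - 1)` intervals whose lengths are powers of `m`,
extended to a periodic subdivision of `ℝ` indexed by `ℤ`. -/
lemma exists_subdivision {m : ℕ} (hm : 2 ≤ m) {q : ℕ} (hq : 1 ≤ q) :
    ∃ b : ℤ → ℝ, b 0 = 0 ∧ (∀ i, b (i + (q * (m - 1) : ℕ)) = b i + (m - 1 : ℕ)) ∧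
      ∀ i, ∃ s : ℤ, b (i + 1) = b i + (m : ℝ) ^ s := by
  obtain ⟨q, rfl⟩ := Nat.exists_eq_add_of_le' hq
  obtain ⟨s, hs⟩ := exists_partition hm q
  have hn : 0 < (q + 1) * (m - 1) := Nat.mul_pos (by omega) (by omega)
  generalize (q + 1) * (m - 1) = n at *
  generalize ((m - 1 : ℕ) : ℝ) = r at *
  have hnz : (n : ℤ) ≠ 0 := by omega
  set b : ℤ → ℝ := fun i =>
    (i / n : ℤ) * r + ∑ j ∈ Finset.range (i % n).toNat, (m : ℝ) ^ s j with hb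
  have key : ∀ (c : ℤ) (j : ℕ), j ≤ n →
      b (n * c + j) = c * r + ∑ j ∈ Finset.range j, (m : ℝ) ^ s j := by
    intro c j hj
    rcases hj.lt_or_eq with h | rfl
    · have h1 : ((n : ℤ) * c + j) / n = c := by
        rw [add_comm, Int.add_mul_ediv_left _ _ hnz,
          Int.ediv_eq_zero_of_lt (by omega) (by omega), zero_add]
      have h2 : ((n : ℤ) * c + j) % n = j := by
        rw [Int.mul_add_emod_self_left, Int.emod_eq_of_lt (by omega) (by omega)]
      simp only [hb, h1, h2, Int.toNat_natCast]
    · have h1 : ((j : ℤ) * c + j) / j = c + 1 := by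
        rw [show (j : ℤ) * c + j = j * (c + 1) by ring, Int.mul_ediv_cancel_left _ hnz]
      have h2 : ((j : ℤ) * c + j) % j = 0 := by
        rw [show (j : ℤ) * c + j = j * (c + 1) by ring, Int.mul_emod_right]
      simp only [hb, h1, h2, hs, Int.toNat_zero, Finset.range_zero, Finset.sum_empty]
      push_cast; ring
  have hrep : ∀ i : ℤ, ∃ (c : ℤ) (j : ℕ), j < n ∧ i = n * c + j := by
    intro i
    have h1 := Int.emod_nonneg i hnz
    have h2 := Int.emod_lt_of_pos i (show (0 : ℤ) < n by omega)
    have h3 := Int.mul_ediv_add_emod i n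
    exact ⟨i / n, (i % n).toNat, by omega, by omega⟩
  refine ⟨b, by simp [hb], fun i => ?_, fun i => ?_⟩
  · obtain ⟨c, j, hj, rfl⟩ := hrep i
    rw [show (n : ℤ) * c + j + n = n * (c + 1) + j by ring, key _ _ hj.le, key _ _ hj.le]
    push_cast; ring
  · obtain ⟨c, j, hj, rfl⟩ := hrep i
    refine ⟨s j, ?_⟩
    have h1 := key c (j + 1) hj
    rw [Finset.sum_range_succ] at h1
    push_cast at h1
    rw [show (n : ℤ) * c + j + 1 = n * c + (j + 1) by ring, h1, key _ _ hj.le]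
    ring

/-- The piecewise affine function on `ℝ` taking the value `b i` at each integer `i`. -/
noncomputable def interp (b : ℤ → ℝ) (t : ℝ) : ℝ :=
  b ⌊t⌋ + (t - ⌊t⌋) * (b (⌊t⌋ + 1) - b ⌊t⌋)

lemma interp_eq (b : ℤ → ℝ) {i : ℤ} {t : ℝ} (h0 : (i : ℝ) ≤ t) (h1 : t ≤ i + 1) :
    interp b t = b i + (t - i) * (b (i + 1) - b i) := by
  rcases h1.lt_or_eq with h | rfl
  · have : ⌊t⌋ = i := Int.floor_eq_iff.2 ⟨h0, h⟩
    rw [interp, this]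
  · have : ⌊(i : ℝ) + 1⌋ = i + 1 := by
      rw [Int.floor_add_one, Int.floor_intCast]
    rw [interp, this]
    push_cast
    ring

lemma interp_intCast (b : ℤ → ℝ) (i : ℤ) : interp b i = b i := by
  rw [interp_eq b le_rfl (by linarith)]; simp

lemma interp_strictMono {b : ℤ → ℝ} (hb : StrictMono b) : StrictMono (interp b) := by
  intro t u htu
  have ht := Int.floor_le t
  have ht' := Int.lt_floor_add_one t
  have hu := Int.floor_le u
  have h1 := hb (Int.lt_succ ⌊t⌋)
  have h2 := hb (Int.lt_succ ⌊u⌋)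
  rcases (Int.floor_mono htu.le).lt_or_eq with h | h
  · have h3 : b (⌊t⌋ + 1) ≤ b ⌊u⌋ := hb.monotone h
    unfold interp
    nlinarith
  · unfold interp
    rw [← h]
    nlinarith

lemma interp_surjective {b : ℤ → ℝ} (hb : StrictMono b) {n r : ℕ} (hr : 0 < r)
    (hb0 : b 0 = 0) (hper : ∀ i, b (i + n) = b i + r) : Function.Surjective (interp b) := by
  intro y
  have hrR : (0 : ℝ) < r := by exact_mod_cast hr
  have hmul : ∀ k : ℤ, b (k * n) = k * r := by
    intro k
    induction k using Int.induction_on with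
    | zero => simp [hb0]
    | succ i ih =>
      rw [add_mul, one_mul, hper, ih]; push_cast; ring
    | pred i ih =>
      have := hper ((-(i : ℤ) - 1) * n)
      rw [show (-(i : ℤ) - 1) * n + n = -(i : ℤ) * n by ring, ih] at this
      push_cast at this ⊢
      linarith
  obtain ⟨i, hi, hmax⟩ := Int.exists_greatest_of_bdd (P := fun i => b i ≤ y)
    ⟨(⌊y / r⌋ + 1) * n, fun z hz => by
      by_contra! h
      have h1 := hb h
      rw [hmul] at h1
      have h2 := Int.lt_floor_add_one (y / r)
      rw [div_lt_iff₀ hrR] at h2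
      push_cast at h1
      linarith⟩
    ⟨⌊y / r⌋ * n, by
      rw [hmul]
      exact (le_div_iff₀ hrR).1 (Int.floor_le _)⟩
  have hi1 : y < b (i + 1) := by
    by_contra! h
    have := hmax _ h
    omega
  have hd : 0 < b (i + 1) - b i := by linarith
  refine ⟨i + (y - b i) / (b (i + 1) - b i), ?_⟩
  rw [interp_eq b (i := i)]
  · field_simp
    ring
  · have : 0 ≤ (y - b i) / (b (i + 1) - b i) := div_nonneg (by linarith) hd.le
    linarith
  · have : (y - b i) / (b (i + 1) - b i) ≤ 1 := (div_le_one hd).2 (by linarith)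
    linarith

/-- The permutation of `ℝ/rℤ` induced by a bijection of `ℝ` commuting with translation
by `r`. -/
noncomputable def circlePerm (r : ℝ) (G : ℝ ≃ ℝ) (hG : ∀ x, G (x + r) = G x + r) :
    Equiv.Perm (AddCircle r) where
  toFun := Function.Periodic.lift (f := fun x => (G x : AddCircle r)) (c := r)
    (fun x => by simp [hG])
  invFun := Function.Periodic.lift (f := fun x => (G.symm x : AddCircle r)) (c := r)
    (fun x => by
      have : G.symm (x + r) = G.symm x + r := by
        rw [G.symm_apply_eq, hG, G.apply_symm_apply]
      simp [this])
  left_inv := by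
    intro u
    induction u using QuotientAddGroup.induction_on with
    | H x => exact congrArg _ (G.symm_apply_apply x)
  right_inv := by
    intro u
    induction u using QuotientAddGroup.induction_on with
    | H x => exact congrArg _ (G.apply_symm_apply x)

lemma circlePerm_coe (r : ℝ) (G : ℝ ≃ ℝ) (hG : ∀ x, G (x + r) = G x + r) (x : ℝ) :
    circlePerm r G hG (x : AddCircle r) = (G x : AddCircle r) := rfl

/-- `T_{m-1,m}` contains an element of every finite order `q`: rotate the `q * (m - 1)` pieces of
a subdivision of the circle by `m - 1` places. -/
lemma exists_inT_orderOf {m : ℕ} (hm : 2 ≤ m) {q : ℕ} (hq : 1 ≤ q) :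
    ∃ f : Equiv.Perm (AddCircle ((m - 1 : ℕ) : ℝ)), InT (m - 1) m f ∧ orderOf f = q := by
  obtain ⟨b, hb0, hper, hstep⟩ := exists_subdivision hm hq
  have hmR : (0 : ℝ) < m := by positivity
  have hk : 0 < m - 1 := by omega
  have hbA : ∀ i, b i ∈ ringZInv m hm := by
    intro i
    induction i using Int.induction_on with
    | zero => rw [hb0]; exact zero_mem _
    | succ i ih =>
      obtain ⟨s, hs⟩ := hstep i
      rw [hs]; exact add_mem ih (zpow_mem_ringZInv hm s)
    | pred i ih =>
      obtain ⟨s, hs⟩ := hstep (-i - 1)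
      rw [sub_add_cancel] at hs
      rw [eq_sub_of_add_eq hs.symm]
      exact sub_mem ih (zpow_mem_ringZInv hm s)
  have hbmono : StrictMono b := strictMono_int_of_lt_succ fun i => by
    obtain ⟨s, hs⟩ := hstep i
    have := zpow_pos hmR s
    linarith
  have hsurj := interp_surjective hbmono hk hb0 hper
  set k := m - 1 with hkdef
  set e : ℝ ≃o ℝ := StrictMono.orderIsoOfSurjective (interp b) (interp_strictMono hbmono) hsurj
    with he
  have hee : ∀ t, e t = interp b t := fun t => rfl
  have heint : ∀ i : ℤ, e i = b i := interp_intCast b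
  have heper : ∀ t, e (t + (q * k : ℕ)) = e t + k := by
    intro t
    simp only [hee, interp]
    have h1 : ⌊t + ((q * k : ℕ) : ℝ)⌋ = ⌊t⌋ + (q * k : ℕ) := Int.floor_add_natCast _ _
    rw [h1, hper, show ⌊t⌋ + ((q * k : ℕ) : ℤ) + 1 = ⌊t⌋ + 1 + (q * k : ℕ) by ring, hper]
    push_cast; ring
  have hesper : ∀ x, e.symm (x + k) = e.symm x + (q * k : ℕ) := by
    intro x
    rw [e.symm_apply_eq, heper, e.apply_symm_apply]
  -- conjugate of the translation by `k = m - 1` places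
  set G : ℝ ≃ ℝ := (e.symm.toEquiv.trans (Equiv.addRight (k : ℝ))).trans e.toEquiv with hGdef
  have hGa : ∀ x, G x = e (e.symm x + k) := fun x => rfl
  have hGper : ∀ x, G (x + k) = G x + k := by
    intro x
    rw [hGa, hGa, hesper, add_right_comm, heper]
  have hGb : ∀ i : ℤ, G (b i) = b (i + k) := by
    intro i
    rw [hGa, ← heint, e.symm_apply_apply, ← heint]
    push_cast; rfl
  have hpow : ∀ (j : ℕ) (x : ℝ), (circlePerm k G hGper ^ j) (x : AddCircle (k : ℝ)) =
      (e (e.symm x + j * k) : ℝ) := by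
    intro j x
    induction j with
    | zero => simp
    | succ j ih =>
      rw [pow_succ', Equiv.Perm.mul_apply, ih, circlePerm_coe, hGa, e.symm_apply_apply]
      congr 2
      push_cast; ring
  refine ⟨circlePerm k G hGper, ⟨G, ⟨?_, hGper, q * k, fun i => b (i : ℕ), ?_, hb0, ?_,
    fun i => hbA _, fun i => ?_, fun i => ?_⟩, fun x => rfl⟩, ?_⟩
  · intro x y hxy
    rw [hGa, hGa]
    have := e.symm.strictMono hxy
    exact e.strictMono (by linarith)
  · intro i j hij
    exact hbmono (by exact_mod_cast hij)
  · have := hper 0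
    rw [zero_add, hb0, zero_add] at this
    simpa using this
  · rw [hGb]; exact hbA _
  · obtain ⟨s, hs⟩ := hstep (i : ℕ)
    obtain ⟨s', hs'⟩ := hstep ((i : ℕ) + k)
    have hm0 : (m : ℝ) ≠ 0 := hmR.ne'
    refine ⟨s' - s, b ((i : ℕ) + k) - (m : ℝ) ^ (s' - s) * b (i : ℕ), fun x hx => ?_⟩
    simp only [Fin.val_castSucc, Fin.val_succ, Set.mem_Icc] at hx
    push_cast at hx
    have hp := zpow_pos hmR s
    have h1 : e.symm x = ((i : ℕ) : ℤ) + (x - b (i : ℕ)) / (m : ℝ) ^ s := by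
      rw [e.symm_apply_eq, hee, interp_eq b (i := ((i : ℕ) : ℤ)), hs]
      · field_simp
        ring
      · have : 0 ≤ (x - b (i : ℕ)) / (m : ℝ) ^ s := div_nonneg (by linarith) hp.le
        linarith
      · have : (x - b (i : ℕ)) / (m : ℝ) ^ s ≤ 1 := (div_le_one hp).2 (by linarith)
        linarith
    have h0 : 0 ≤ (x - b (i : ℕ)) / (m : ℝ) ^ s := div_nonneg (by linarith) hp.le
    have h2 : (x - b (i : ℕ)) / (m : ℝ) ^ s ≤ 1 := (div_le_one hp).2 (by linarith)
    rw [hGa, h1, hee, interp_eq b (i := ((i : ℕ) : ℤ) + k), hs', zpow_sub₀ hm0]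
    · push_cast
      field_simp
      ring
    · push_cast; linarith
    · push_cast; linarith
  · rw [orderOf_eq_iff hq]
    constructor
    · ext u
      induction u using QuotientAddGroup.induction_on with
      | H x =>
        refine (hpow q x).trans ?_
        have := heper (e.symm x)
        push_cast at this
        rw [this, e.apply_symm_apply]
        simp
    · intro j hjq hj0 hone
      have h1 := hpow j 0
      have h2 : e.symm 0 = 0 := by
        rw [e.symm_apply_eq]
        have := heint 0
        rw [Int.cast_zero, hb0] at this
        exact this.symm
      have h3 : e ((j : ℝ) * k) = b ((j * k : ℕ) : ℤ) := by
        rw [← heint]; push_cast; rfl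
      rw [hone, h2, zero_add, h3] at h1
      have h4 : 0 < b ((j * k : ℕ) : ℤ) := by
        rw [← hb0]
        exact hbmono (by exact_mod_cast Nat.mul_pos hj0 hk)
      have h5 : b ((j * k : ℕ) : ℤ) < k := by
        have := hper 0
        rw [hb0, zero_add, zero_add] at this
        rw [← this]
        exact hbmono (by exact_mod_cast Nat.mul_lt_mul_of_pos_right hjq hk)
      obtain ⟨c, hc⟩ := exists_int_of_coe_eq h1.symm
      rw [zero_add] at hc
      rw [hc] at h4 h5
      have hkR : (0 : ℝ) < k := by exact_mod_cast hk
      have h6 : (0 : ℝ) < c := by nlinarith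
      have h7 : (c : ℝ) < 1 := by nlinarith
      have h8 : 0 < c := by exact_mod_cast h6
      have h9 : c < 1 := by exact_mod_cast h7
      omega

/-- Among the groups `T_{r,m}` with `0 < r ≤ m-1`, only `T_{m-1,m}` contains elements of
every finite order; consequently there is no injective group homomorphism from
`T_{m-1,m}` into `T_{r,m}` for `0 < r < m-1`. -/
theorem only_T_m_sub_one_has_all_orders (m : ℕ) (hm : 2 ≤ m) :
    (∀ r : ℕ, 0 < r → r ≤ m - 1 →
      ((∀ q : ℕ, 1 ≤ q → ∃ f : Equiv.Perm (AddCircle (r : ℝ)), InT r m f ∧ orderOf f = q)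
        ↔ r = m - 1)) ∧
    (∀ r : ℕ, 0 < r → r < m - 1 →
      ∀ φ : TGroup (m - 1) m →* TGroup r m, ¬ Function.Injective φ) := by
  constructor
  · intro r hr hrm
    constructor
    · intro h
      obtain ⟨f, hf, hford⟩ := h (m - 1) (by omega)
      have := Nat.le_of_dvd hr (dvd_of_orderOf_eq hr hm (hf.hasGoodLift hr hm) hford)
      omega
    · rintro rfl q hq
      exact exists_inT_orderOf hm hq
  · intro r hr hrm φ hφ
    obtain ⟨f, hf, hford⟩ := exists_inT_orderOf hm (q := m - 1) (by omega)
    let g : TGroup (m - 1) m := ⟨f, Subgroup.subset_closure hf⟩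
    have hg : orderOf (φ g : Equiv.Perm (AddCircle (r : ℝ))) = m - 1 := by
      rw [Subgroup.orderOf_coe, orderOf_injective φ hφ, ← Subgroup.orderOf_coe, hford]
    have := Nat.le_of_dvd hr (dvd_of_orderOf_eq hr hm (hasGoodLift_of_mem hr hm (φ g).2) hg)
    omega
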